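/- arXiv:1706.00575 — 4 statements merged into one kernel-verified Lean document; each statement's English description precedes it below -/
import Mathlib

section
/- Let H be a finite connected simple graph whose vertex set admits a partition into three nonempty parts V₁, V₂, V₃ such that each part induces a connected subgraph of H and, for every pair i ≠ j, there are at least two edges of H with one endpoint in V_i and the other in V_j. Then for every finite simple graph G, the complement of the 2-subdivision of G is an H-graph, i.e., it admits an H-representation. -/
/-- The 2-subdivision of a graph `G`, given a fixed choice `l e`, `r e` of the two
endpoints of each edge `e`: every edge `e` is replaced by the path
`(l e, (e,0), (e,1), r e)` on two new internal vertices. -/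
def Subd2 {V : Type} (G : SimpleGraph V) (l r : G.edgeSet → V) :
    SimpleGraph (V ⊕ (G.edgeSet × Fin 2)) :=
  SimpleGraph.fromRel fun x y =>
    match x, y with
    | Sum.inl u, Sum.inr p => (u = l p.1 ∧ p.2 = 0) ∨ (u = r p.1 ∧ p.2 = 1)
    | Sum.inr p, Sum.inr q => p.1 = q.1 ∧ p.2 ≠ q.2
    | _, _ => False

/-- The subdivision of a graph `H` in which each edge `e` (with fixed endpoints
`l e` and `r e`) is replaced by a path from `l e` to `r e` with `n e` new internal
vertices (possibly zero, in which case the edge is kept as is). -/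
def SubdivOf {W : Type} (H : SimpleGraph W) (l r : H.edgeSet → W) (n : H.edgeSet → ℕ) :
    SimpleGraph (W ⊕ (Σ e : H.edgeSet, Fin (n e))) :=
  SimpleGraph.fromRel fun x y =>
    match x, y with
    | Sum.inl u, Sum.inl v => ∃ e : H.edgeSet, n e = 0 ∧ u = l e ∧ v = r e
    | Sum.inl u, Sum.inr p => (u = l p.1 ∧ (p.2 : ℕ) = 0) ∨ (u = r p.1 ∧ (p.2 : ℕ) + 1 = n p.1)
    | Sum.inr p, Sum.inr q => p.1 = q.1 ∧ (p.2 : ℕ) + 1 = (q.2 : ℕ)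
    | _, _ => False

/-- `G` is an `H`-graph: there is a subdivision `H'` of `H` and a family of nonempty
connected subsets of `V(H')` indexed by the vertices of `G` such that two distinct
vertices of `G` are adjacent iff the corresponding subsets intersect. -/
def IsHGraph {W V : Type} (H : SimpleGraph W) (G : SimpleGraph V) : Prop :=
  ∃ (l r : H.edgeSet → W) (_ : ∀ e : H.edgeSet, (e : Sym2 W) = s(l e, r e))
    (n : H.edgeSet → ℕ) (S : V → Set (W ⊕ (Σ e : H.edgeSet, Fin (n e)))),
    (∀ v, (S v).Nonempty) ∧
    (∀ v, ((SubdivOf H l r n).induce (S v)).Connected) ∧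
    (∀ u v : V, u ≠ v → (G.Adj u v ↔ (S u ∩ S v).Nonempty))

/-- There are at least two edges of `H` with one endpoint in `A` and the other in `B`. -/
def TwoCrossEdges {W : Type} (H : SimpleGraph W) (A B : Set W) : Prop :=
  ∃ e₁ e₂ : Sym2 W, e₁ ≠ e₂ ∧ e₁ ∈ H.edgeSet ∧ e₂ ∈ H.edgeSet ∧
    (∃ a ∈ A, ∃ b ∈ B, e₁ = s(a, b)) ∧ (∃ a ∈ A, ∃ b ∈ B, e₂ = s(a, b))

/-- The relation of being joined by a path of `Γ` inside the vertex set `S`. -/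
def ReachableIn {X : Type*} (Γ : SimpleGraph X) (S : Set X) (x y : X) : Prop :=
  ∃ (hx : x ∈ S) (hy : y ∈ S), (Γ.induce S).Reachable ⟨x, hx⟩ ⟨y, hy⟩

namespace ReachableIn

variable {X : Type*} {Γ : SimpleGraph X} {S : Set X} {x y z : X}

theorem of_mem (hx : x ∈ S) : ReachableIn Γ S x x :=
  ⟨hx, hx, SimpleGraph.Reachable.refl _⟩

theorem of_adj (hx : x ∈ S) (hy : y ∈ S) (h : Γ.Adj x y) : ReachableIn Γ S x y :=
  ⟨hx, hy, SimpleGraph.Adj.reachable (by simpa using h)⟩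

theorem symm (h : ReachableIn Γ S x y) : ReachableIn Γ S y x :=
  ⟨h.2.1, h.1, h.2.2.symm⟩

theorem trans (h : ReachableIn Γ S x y) (h' : ReachableIn Γ S y z) : ReachableIn Γ S x z :=
  ⟨h.1, h'.2.1, h.2.2.trans h'.2.2⟩

theorem induce_connected (h : ∀ y ∈ S, ReachableIn Γ S x y) (hS : S.Nonempty) :
    (Γ.induce S).Connected := by
  obtain ⟨z, hz⟩ := hS
  have : Nonempty S := ⟨⟨z, hz⟩⟩
  refine ⟨fun a b => ?_⟩
  exact ((h a a.2).symm.trans (h b b.2)).2.2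

end ReachableIn

section UniformSubdivision

variable {W : Type} {H : SimpleGraph W} {l r : H.edgeSet → W} {N : ℕ}

/-- In a subdivision with `N + 1` new vertices on each edge, an initial segment of a
subdivided edge is reachable from the left endpoint. -/
theorem reachableIn_left {S : Set (W ⊕ (Σ _ : H.edgeSet, Fin (N + 1)))} (e : H.edgeSet)
    (hl : Sum.inl (l e) ∈ S) (k : ℕ) (hk : k < N + 1)
    (hS : ∀ j : Fin (N + 1), (j : ℕ) ≤ k → Sum.inr ⟨e, j⟩ ∈ S) :
    ReachableIn (SubdivOf H l r fun _ => N + 1) S (Sum.inl (l e)) (Sum.inr ⟨e, ⟨k, hk⟩⟩) := by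
  induction k with
  | zero =>
    refine .of_adj hl (hS _ le_rfl) ?_
    simp [SubdivOf]
  | succ k ih =>
    refine (ih (by omega) fun j hj => hS j (by omega)).trans
      (.of_adj (hS _ (by simp)) (hS _ le_rfl) ?_)
    simp [SubdivOf]

/-- In a subdivision with `N + 1` new vertices on each edge, a final segment of a
subdivided edge is reachable from the right endpoint. -/
theorem reachableIn_right {S : Set (W ⊕ (Σ _ : H.edgeSet, Fin (N + 1)))} (e : H.edgeSet)
    (hr : Sum.inl (r e) ∈ S) (k : ℕ) (hk : k < N + 1)
    (hS : ∀ j : Fin (N + 1), k ≤ (j : ℕ) → Sum.inr ⟨e, j⟩ ∈ S) :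
    ReachableIn (SubdivOf H l r fun _ => N + 1) S (Sum.inl (r e)) (Sum.inr ⟨e, ⟨k, hk⟩⟩) := by
  induction hd : N - k generalizing k with
  | zero =>
    refine .of_adj hr (hS _ le_rfl) ?_
    have : k = N := by omega
    simp [SubdivOf, this]
  | succ d ih =>
    refine (ih (k + 1) (by omega) (fun j hj => hS j (by omega)) (by omega)).trans
      (.of_adj (hS _ (by simp)) (hS _ le_rfl) ?_)
    simp [SubdivOf]

variable {κ : Type}

/-- All branch vertices of the part `c`, together with, for each edge `e`, the first `t e`
subdivision vertices if `e` starts in `c` and all but the first `t e` if `e` ends in `c`. -/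
def partSet (p : W → κ) (l r : H.edgeSet → W) (N : ℕ) (c : κ) (t : H.edgeSet → ℕ) :
    Set (W ⊕ (Σ _ : H.edgeSet, Fin (N + 1))) :=
  {x | match x with
    | Sum.inl w => p w = c
    | Sum.inr q => (p (l q.1) = c ∧ (q.2 : ℕ) < t q.1) ∨ (p (r q.1) = c ∧ t q.1 ≤ (q.2 : ℕ))}

theorem inl_mem_partSet {p : W → κ} {c : κ} {t : H.edgeSet → ℕ} {w : W} :
    Sum.inl w ∈ partSet p l r N c t ↔ p w = c := Iff.rfl

theorem inr_mem_partSet {p : W → κ} {c : κ} {t : H.edgeSet → ℕ} {e : H.edgeSet}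
    {k : Fin (N + 1)} :
    Sum.inr ⟨e, k⟩ ∈ partSet p l r N c t ↔
      (p (l e) = c ∧ (k : ℕ) < t e) ∨ (p (r e) = c ∧ t e ≤ (k : ℕ)) := Iff.rfl

theorem partSet_connected (hlr : ∀ e : H.edgeSet, (e : Sym2 W) = s(l e, r e)) (p : W → κ)
    (c : κ) (hc : (H.induce {w | p w = c}).Connected) (t : H.edgeSet → ℕ) :
    ((SubdivOf H l r fun _ => N + 1).induce (partSet p l r N c t)).Connected := by
  set S := partSet p l r N c t with hSdef
  have inner (e : H.edgeSet) (hl : p (l e) = c) (hr : p (r e) = c) :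
      ReachableIn (SubdivOf H l r fun _ => N + 1) S (Sum.inl (l e)) (Sum.inl (r e)) := by
    have hall (j : Fin (N + 1)) : Sum.inr ⟨e, j⟩ ∈ S := by
      rw [hSdef, inr_mem_partSet]
      have := lt_or_ge (j : ℕ) (t e)
      tauto
    exact (reachableIn_left e hl N (by omega) fun j _ => hall j).trans
      (reachableIn_right e hr N (by omega) fun j _ => hall j).symm
  have adj (a b : W) (ha : p a = c) (hb : p b = c) (hab : H.Adj a b) :
      ReachableIn (SubdivOf H l r fun _ => N + 1) S (Sum.inl a) (Sum.inl b) := by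
    have h := hlr ⟨s(a, b), hab⟩
    rcases Sym2.eq_iff.1 h with ⟨h1, h2⟩ | ⟨h1, h2⟩
    · have := inner ⟨s(a, b), hab⟩ (h1 ▸ ha) (h2 ▸ hb)
      rwa [← h1, ← h2] at this
    · have := inner ⟨s(a, b), hab⟩ (h2 ▸ hb) (h1 ▸ ha)
      rw [← h1, ← h2] at this
      exact this.symm
  have branch (a b : {w | p w = c}) :
      ReachableIn (SubdivOf H l r fun _ => N + 1) S (Sum.inl a.1) (Sum.inl b.1) := by
    obtain ⟨q⟩ := hc.preconnected a b
    induction q with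
    | @nil u => exact .of_mem u.2
    | @cons u v _ h _ ih => exact (adj u v u.2 v.2 (by simpa using h)).trans ih
  obtain ⟨w, hw⟩ := hc.nonempty
  refine ReachableIn.induce_connected (x := Sum.inl w) ?_ ⟨Sum.inl w, hw⟩
  rintro (w' | ⟨e, k, hk⟩) hx
  · exact branch ⟨w, hw⟩ ⟨w', hx⟩
  · rcases inr_mem_partSet.1 hx with ⟨hl, hkt⟩ | ⟨hr, hkt⟩
    · refine (branch ⟨w, hw⟩ ⟨l e, hl⟩).trans (reachableIn_left e hl k hk fun j hj => ?_)
      exact inr_mem_partSet.2 (.inl ⟨hl, lt_of_le_of_lt hj hkt⟩)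
    · refine (branch ⟨w, hw⟩ ⟨r e, hr⟩).trans (reachableIn_right e hr k hk fun j hj => ?_)
      exact inr_mem_partSet.2 (.inr ⟨hr, le_trans hkt hj⟩)

theorem partSet_inter_nonempty_of_ne {p : W → κ} {c d : κ} (hcd : c ≠ d)
    {t u : H.edgeSet → ℕ} (ht : ∀ e, t e ≤ N) (hu : ∀ e, u e ≤ N) :
    (partSet p l r N c t ∩ partSet p l r N d u).Nonempty ↔
      ∃ e, (p (l e) = c ∧ p (r e) = d ∧ u e < t e) ∨
        (p (l e) = d ∧ p (r e) = c ∧ t e < u e) := by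
  constructor
  · rintro ⟨w | ⟨e, k⟩, hx, hy⟩
    · exact absurd (hx.symm.trans hy) hcd
    · rw [inr_mem_partSet] at hx hy
      refine ⟨e, ?_⟩
      rcases hx with ⟨h1, h2⟩ | ⟨h1, h2⟩ <;> rcases hy with ⟨h3, h4⟩ | ⟨h3, h4⟩
      · exact absurd (h1.symm.trans h3) hcd
      · exact .inl ⟨h1, h3, by omega⟩
      · exact .inr ⟨h3, h1, by omega⟩
      · exact absurd (h1.symm.trans h3) hcd
  · rintro ⟨e, ⟨h1, h2, h3⟩ | ⟨h1, h2, h3⟩⟩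
    · refine ⟨Sum.inr ⟨e, ⟨u e, by have := hu e; omega⟩⟩, ?_, ?_⟩
      · exact inr_mem_partSet.2 (.inl ⟨h1, h3⟩)
      · exact inr_mem_partSet.2 (.inr ⟨h2, le_rfl⟩)
    · refine ⟨Sum.inr ⟨e, ⟨t e, by have := ht e; omega⟩⟩, ?_, ?_⟩
      · exact inr_mem_partSet.2 (.inr ⟨h2, le_rfl⟩)
      · exact inr_mem_partSet.2 (.inl ⟨h1, h3⟩)

end UniformSubdivision

/-- A graph whose vertices are split into cliques, two vertices in different cliques being
adjacent iff their labels differ, is an `H`-graph as soon as `H` splits into as many connected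
parts with two edges between any two of them. -/
theorem isHGraph_of_labels {W X T κ : Type} [LinearOrder κ] [Finite T] (H : SimpleGraph W)
    (p : W → κ) (hp : ∀ c, (H.induce {w | p w = c}).Connected)
    (hcross : ∀ i j, i < j → TwoCrossEdges H {w | p w = i} {w | p w = j})
    (Γ : SimpleGraph X) (c : X → κ) (f : X → κ → T)
    (hsame : ∀ u v, u ≠ v → c u = c v → Γ.Adj u v)
    (hdiff : ∀ u v, c u < c v → (Γ.Adj u v ↔ f u (c v) ≠ f v (c u))) :
    IsHGraph H Γ := by
  classical
  obtain ⟨N, ⟨φ⟩⟩ := Finite.exists_equiv_fin T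
  have horient (e : H.edgeSet) : ∃ a b, (e : Sym2 W) = s(a, b) ∧ p a ≤ p b := by
    obtain ⟨e, he⟩ := e
    induction e using Sym2.ind with
    | _ a b =>
      rcases le_total (p a) (p b) with h | h
      · exact ⟨a, b, rfl, h⟩
      · exact ⟨b, a, Sym2.eq_swap, h⟩
  choose l r hlr hle using horient
  have hends (e : H.edgeSet) {i j : κ} (hij : i < j)
      (h : ∃ a ∈ {w | p w = i}, ∃ b ∈ {w | p w = j}, (e : Sym2 W) = s(a, b)) :
      p (l e) = i ∧ p (r e) = j := by
    obtain ⟨a, rfl, b, rfl, h⟩ := h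
    rw [hlr e] at h
    rcases Sym2.eq_iff.1 h with ⟨h1, h2⟩ | ⟨h1, h2⟩
    · rw [h1, h2]; exact ⟨rfl, rfl⟩
    · have := hle e
      rw [h1, h2] at this
      exact absurd hij this.not_gt
  have htwo (i j : κ) : ∃ E : H.edgeSet → Prop, i < j →
      (∃ e, E e ∧ p (l e) = i ∧ p (r e) = j) ∧ ∃ e, ¬ E e ∧ p (l e) = i ∧ p (r e) = j := by
    by_cases hij : i < j
    · obtain ⟨e₁, e₂, hne, he₁, he₂, h₁, h₂⟩ := hcross i j hij
      exact ⟨fun e => e = ⟨e₁, he₁⟩, fun _ => ⟨⟨⟨e₁, he₁⟩, rfl, hends ⟨e₁, he₁⟩ hij h₁⟩,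
        ⟨⟨e₂, he₂⟩, by simpa using hne.symm, hends ⟨e₂, he₂⟩ hij h₂⟩⟩⟩
    · exact ⟨fun _ => True, fun h => absurd h hij⟩
  choose E hE using htwo
  let idx (v : X) (e : H.edgeSet) : ℕ := φ (f v (if c v = p (l e) then p (r e) else p (l e)))
  let t (v : X) (e : H.edgeSet) : ℕ := if E (p (l e)) (p (r e)) e then idx v e else N - idx v e
  have hidx (v : X) (e : H.edgeSet) : idx v e < N := Fin.is_lt _
  have ht (v : X) (e : H.edgeSet) : t v e ≤ N := by
    have := hidx v e
    simp only [t]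
    split_ifs <;> omega
  have key (u v : X) (huv : c u < c v) : Γ.Adj u v ↔
      (partSet p l r N (c u) (t u) ∩ partSet p l r N (c v) (t v)).Nonempty := by
    rw [partSet_inter_nonempty_of_ne huv.ne (ht u) (ht v), hdiff u v huv]
    have hval (e : H.edgeSet) (h1 : p (l e) = c u) (h2 : p (r e) = c v) :
        idx u e = φ (f u (c v)) ∧ idx v e = φ (f v (c u)) := by
      simp [idx, h1, h2, huv.ne']
    constructor
    · intro hne
      have hne' : (φ (f u (c v)) : ℕ) ≠ φ (f v (c u)) := fun h =>
        hne (φ.injective (Fin.ext h))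
      obtain ⟨⟨e, hEe, h1, h2⟩, ⟨e', hEe', h1', h2'⟩⟩ := hE _ _ huv
      obtain ⟨hu, hv⟩ := hval e h1 h2
      obtain ⟨hu', hv'⟩ := hval e' h1' h2'
      rcases lt_or_gt_of_ne hne' with h | h
      · refine ⟨e', .inl ⟨h1', h2', ?_⟩⟩
        have := hidx v e'
        simp only [t, h1', h2', if_neg hEe']
        omega
      · refine ⟨e, .inl ⟨h1, h2, ?_⟩⟩
        simp only [t, h1, h2, if_pos hEe]
        omega
    · rintro ⟨e, ⟨h1, h2, h3⟩ | ⟨h1, h2, h3⟩⟩ heq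
      · obtain ⟨hu, hv⟩ := hval e h1 h2
        have : idx u e = idx v e := by rw [hu, hv, heq]
        simp only [t, this] at h3
        exact h3.false
      · exact absurd (h1 ▸ h2 ▸ hle e) huv.not_ge
  refine ⟨l, r, hlr, fun _ => N + 1, fun v => partSet p l r N (c v) (t v), fun v => ?_,
    fun v => partSet_connected hlr p (c v) (hp _) (t v), fun u v huv => ?_⟩
  · obtain ⟨w, hw⟩ := (hp (c v)).nonempty
    exact ⟨Sum.inl w, hw⟩
  · rcases lt_trichotomy (c u) (c v) with h | h | h
    · exact key u v h
    · obtain ⟨w, hw⟩ := (hp (c u)).nonempty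
      exact iff_of_true (hsame u v huv h) ⟨Sum.inl w, hw, hw.trans h⟩
    · rw [SimpleGraph.adj_comm, Set.inter_comm]
      exact key v u h

/-- The three colour classes of the 2-subdivision of a graph. -/
def subd2Part {V : Type} {G : SimpleGraph V} : V ⊕ (G.edgeSet × Fin 2) → Fin 3
  | Sum.inl _ => 0
  | Sum.inr q => q.2.succ

/-- The label of a vertex of the 2-subdivision relative to a colour class; vertices of
different classes are adjacent iff their labels relative to each other's class agree. -/
def subd2Label {V : Type} {G : SimpleGraph V} (l r : G.edgeSet → V) :
    V ⊕ (G.edgeSet × Fin 2) → Fin 3 → V ⊕ G.edgeSet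
  | Sum.inl v, _ => Sum.inl v
  | Sum.inr q, i => if i = 0 then Sum.inl (if q.2 = 0 then l q.1 else r q.1) else Sum.inr q.1

/-- If the vertex set of a finite connected graph `H` can be partitioned into three
nonempty parts, each inducing a connected subgraph, with at least two edges between
each pair of parts, then for every finite graph `G` the complement of the
2-subdivision of `G` is an `H`-graph. -/
theorem complSubd2_isHGraph {W : Type} [Fintype W] (H : SimpleGraph W)
    (hH : H.Connected) (V1 V2 V3 : Set W)
    (h1 : V1.Nonempty) (h2 : V2.Nonempty) (h3 : V3.Nonempty)
    (h12 : Disjoint V1 V2) (h13 : Disjoint V1 V3) (h23 : Disjoint V2 V3)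
    (hcover : V1 ∪ V2 ∪ V3 = Set.univ)
    (hc1 : (H.induce V1).Connected) (hc2 : (H.induce V2).Connected)
    (hc3 : (H.induce V3).Connected)
    (he12 : TwoCrossEdges H V1 V2) (he13 : TwoCrossEdges H V1 V3)
    (he23 : TwoCrossEdges H V2 V3)
    {V : Type} [Fintype V] (G : SimpleGraph V) (l r : G.edgeSet → V)
    (hlr : ∀ e : G.edgeSet, (e : Sym2 V) = s(l e, r e)) :
    IsHGraph H (Subd2 G l r)ᶜ := by
  classical
  have : Finite G.edgeSet := Subtype.finite
  let p (w : W) : Fin 3 := if w ∈ V1 then 0 else if w ∈ V2 then 1 else 2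
  have hp0 : {w | p w = 0} = V1 := by
    ext w
    by_cases hw1 : w ∈ V1 <;> by_cases hw2 : w ∈ V2 <;> simp [p, hw1, hw2]
  have hp1 : {w | p w = 1} = V2 := by
    ext w
    have : w ∈ V1 → w ∉ V2 := fun h => Set.disjoint_left.1 h12 h
    by_cases hw1 : w ∈ V1 <;> by_cases hw2 : w ∈ V2 <;> simp_all [p]
  have hp2 : {w | p w = 2} = V3 := by
    ext w
    have h : (w ∈ V1 ∨ w ∈ V2) ∨ w ∈ V3 := by simpa using hcover.ge (Set.mem_univ w)
    clear hcover
    have : w ∈ V1 → w ∉ V3 := fun h => Set.disjoint_left.1 h13 h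
    have : w ∈ V2 → w ∉ V3 := fun h => Set.disjoint_left.1 h23 h
    by_cases hw1 : w ∈ V1 <;> by_cases hw2 : w ∈ V2 <;> simp_all [p]
  refine isHGraph_of_labels H p ?_ ?_ _ subd2Part (subd2Label l r) ?_ ?_
  · intro c
    fin_cases c
    · exact hp0 ▸ hc1
    · exact hp1 ▸ hc2
    · exact hp2 ▸ hc3
  · intro i j hij
    fin_cases i <;> fin_cases j <;> first | exact absurd hij (by decide) | skip
    · exact hp0 ▸ hp1 ▸ he12
    · exact hp0 ▸ hp2 ▸ he13
    · exact hp1 ▸ hp2 ▸ he23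
  · rintro (u | ⟨e, i⟩) (v | ⟨e', j⟩) huv h
    · simp [Subd2, huv]
    · exact absurd h (Fin.succ_ne_zero _).symm
    · exact absurd h (Fin.succ_ne_zero _)
    · have : i = j := Fin.succ_injective _ h
      subst this
      simpa [Subd2] using huv
  · rintro (u | ⟨e, i⟩) (v | ⟨e', j⟩) h
    · exact absurd h (lt_irrefl _)
    · fin_cases j <;> simp [Subd2, subd2Part, subd2Label]
    · exact absurd h (Fin.not_lt_zero _)
    · have hij : i < j := Fin.succ_lt_succ_iff.1 h
      simp [Subd2, subd2Part, subd2Label, hij.ne, hij.ne', @eq_comm _ e' e]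
end

section
/- For every finite simple graph G, the complement of the 2-subdivision of G is a W₄-graph, where W₄ is the 4-wheel (a 4-cycle together with a hub vertex adjacent to all four cycle vertices). -/
/-- The 4-wheel: the 4-cycle `0-1-2-3-0` together with the hub `4` adjacent to all
four cycle vertices. -/
def W4 : SimpleGraph (Fin 5) :=
  SimpleGraph.fromEdgeSet
    {s(0, 1), s(1, 2), s(2, 3), s(3, 0), s(4, 0), s(4, 1), s(4, 2), s(4, 3)}

section Cuts

variable {W X : Type} (H : SimpleGraph W) (l r : H.edgeSet → W) (N : ℕ)

/-- The subset of the uniform subdivision of `H` consisting of the branch vertices in `C`, together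
with the part before the cut `t e` of every subdivided edge `e` starting in `C`, and the part from
the cut `t e` on of every subdivided edge `e` ending in `C`. -/
def cutSet (C : Set W) (t : H.edgeSet → ℕ) : Set (W ⊕ (Σ _ : H.edgeSet, Fin N)) :=
  {z | match z with
    | Sum.inl u => u ∈ C
    | Sum.inr p => (l p.1 ∈ C ∧ (p.2 : ℕ) < t p.1) ∨ (r p.1 ∈ C ∧ t p.1 ≤ (p.2 : ℕ))}

variable {H l r N}

/-- A vertex of a subdivided edge is joined to the start of the edge inside any set that contains
the initial segment up to it. -/
theorem reachable_start {S : Set (W ⊕ (Σ _ : H.edgeSet, Fin N))} (e : H.edgeSet)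
    (hl : Sum.inl (l e) ∈ S) (k : ℕ) (hk : k < N)
    (hS : ∀ j (hj : j < N), j ≤ k → Sum.inr ⟨e, ⟨j, hj⟩⟩ ∈ S) :
    ((SubdivOf H l r fun _ => N).induce S).Reachable ⟨_, hl⟩ ⟨_, hS k hk le_rfl⟩ := by
  induction k with
  | zero =>
    apply SimpleGraph.Adj.reachable
    simp [SubdivOf]
  | succ k ih =>
    refine (ih (by omega) fun j hj hjk => hS j hj (by omega)).trans
      (SimpleGraph.Adj.reachable ?_)
    simp [SubdivOf]

/-- A vertex of a subdivided edge is joined to the end of the edge inside any set that contains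
the final segment from it on. -/
theorem reachable_end {S : Set (W ⊕ (Σ _ : H.edgeSet, Fin N))} (e : H.edgeSet)
    (hr : Sum.inl (r e) ∈ S) (d k : ℕ) (hk : k < N) (hd : k + d + 1 = N)
    (hS : ∀ j (hj : j < N), k ≤ j → Sum.inr ⟨e, ⟨j, hj⟩⟩ ∈ S) :
    ((SubdivOf H l r fun _ => N).induce S).Reachable ⟨_, hr⟩ ⟨_, hS k hk le_rfl⟩ := by
  induction d generalizing k with
  | zero =>
    apply SimpleGraph.Adj.reachable
    simp [SubdivOf]
    omega
  | succ d ih =>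
    refine (ih (k + 1) (by omega) (by omega) fun j hj hjk => hS j hj (by omega)).trans
      (SimpleGraph.Adj.reachable ?_)
    simp [SubdivOf]

theorem cutSet_induce_connected (hlr : ∀ e : H.edgeSet, (e : Sym2 W) = s(l e, r e)) (hN : 0 < N)
    {C : Set W} (hC : (H.induce C).Connected) (t : H.edgeSet → ℕ) :
    ((SubdivOf H l r fun _ => N).induce (cutSet H l r N C t)).Connected := by
  have hedge (e : H.edgeSet) (hl : l e ∈ C) (hr : r e ∈ C) :
      ((SubdivOf H l r fun _ => N).induce (cutSet H l r N C t)).Reachable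
        ⟨Sum.inl (l e), hl⟩ ⟨Sum.inl (r e), hr⟩ := by
    have hS (j : ℕ) (hj : j < N) : Sum.inr ⟨e, ⟨j, hj⟩⟩ ∈ cutSet H l r N C t := by
      simp only [cutSet, Set.mem_ofPred_eq, hl, hr, true_and]
      omega
    exact (reachable_start e hl 0 hN fun j hj _ => hS j hj).trans
      (reachable_end e hr (N - 1) 0 hN (by omega) fun j hj _ => hS j hj).symm
  have hbranch (u v : C) : ((SubdivOf H l r fun _ => N).induce (cutSet H l r N C t)).Reachable
      ⟨Sum.inl u.1, u.2⟩ ⟨Sum.inl v.1, v.2⟩ := by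
    have huv := hC.preconnected u v
    rw [SimpleGraph.reachable_iff_reflTransGen] at huv
    induction huv with
    | refl => exact SimpleGraph.Reachable.refl _
    | @tail v w _ hvw ih =>
      refine ih.trans ?_
      have hmem : s(v.1, w.1) ∈ H.edgeSet := hvw
      obtain ⟨v, hv⟩ := v
      obtain ⟨w, hw⟩ := w
      have he := hlr ⟨_, hmem⟩
      rcases Sym2.eq_iff.1 he with ⟨h₁, h₂⟩ | ⟨h₁, h₂⟩
      · dsimp only at h₁ h₂
        have := hedge ⟨_, hmem⟩ (h₁ ▸ hv) (h₂ ▸ hw)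
        simpa only [← h₁, ← h₂] using this
      · dsimp only at h₁ h₂
        have := (hedge ⟨_, hmem⟩ (h₂ ▸ hw) (h₁ ▸ hv)).symm
        simpa only [← h₁, ← h₂] using this
  obtain ⟨c⟩ := hC.nonempty
  refine SimpleGraph.connected_iff_exists_forall_reachable _ |>.2 ⟨⟨Sum.inl c.1, c.2⟩, ?_⟩
  rintro ⟨u | ⟨e, k, hk⟩, hz⟩
  · exact hbranch c ⟨u, hz⟩
  · rcases hz with ⟨hl, hkt⟩ | ⟨hr, hkt⟩
    · exact (hbranch c ⟨_, hl⟩).trans (reachable_start e hl k hk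
        fun j hj hjk => Or.inl ⟨hl, lt_of_le_of_lt hjk hkt⟩)
    · exact (hbranch c ⟨_, hr⟩).trans (reachable_end e hr (N - 1 - k) k hk (by omega)
        fun j hj hjk => Or.inr ⟨hr, le_trans hkt hjk⟩)

theorem cutSet_inter_nonempty {C D : Set W} {s t : H.edgeSet → ℕ} (hs : ∀ e, s e ≤ N)
    (ht : ∀ e, t e ≤ N) :
    (cutSet H l r N C s ∩ cutSet H l r N D t).Nonempty ↔
      (C ∩ D).Nonempty ∨ (∃ e, l e ∈ C ∧ r e ∈ D ∧ t e < s e) ∨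
        ∃ e, l e ∈ D ∧ r e ∈ C ∧ s e < t e := by
  constructor
  · rintro ⟨u | ⟨e, k⟩, h₁, h₂⟩
    · exact Or.inl ⟨u, h₁, h₂⟩
    · rcases h₁ with ⟨h₁, h₁'⟩ | ⟨h₁, h₁'⟩ <;> rcases h₂ with ⟨h₂, h₂'⟩ | ⟨h₂, h₂'⟩
      · exact Or.inl ⟨_, h₁, h₂⟩
      · exact Or.inr (Or.inl ⟨e, h₁, h₂, h₂'.trans_lt h₁'⟩)
      · exact Or.inr (Or.inr ⟨e, h₂, h₁, h₁'.trans_lt h₂'⟩)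
      · exact Or.inl ⟨_, h₁, h₂⟩
  · rintro (⟨u, h₁, h₂⟩ | ⟨e, h₁, h₂, h⟩ | ⟨e, h₁, h₂, h⟩)
    · exact ⟨Sum.inl u, h₁, h₂⟩
    · exact ⟨Sum.inr ⟨e, ⟨t e, h.trans_le (hs e)⟩⟩, Or.inl ⟨h₁, h⟩, Or.inr ⟨h₂, le_rfl⟩⟩
    · exact ⟨Sum.inr ⟨e, ⟨s e, h.trans_le (ht e)⟩⟩, Or.inr ⟨h₂, le_rfl⟩, Or.inl ⟨h₁, h⟩⟩

/-- A criterion for being an `H`-graph: each vertex `x` of `G` gets a connected bag `C x` of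
vertices of `H` and a cut `t x p q` of each edge `p < q` of `H`. -/
theorem isHGraph_of_cuts [LinearOrder W] {G : SimpleGraph X} (hN : 0 < N) (C : X → Set W)
    (hC : ∀ x, (H.induce (C x)).Connected) (t : X → W → W → ℕ) (ht : ∀ x p q, t x p q ≤ N)
    (hG : ∀ x y, x ≠ y → (G.Adj x y ↔ (C x ∩ C y).Nonempty ∨
      (∃ p q, H.Adj p q ∧ p < q ∧ p ∈ C x ∧ q ∈ C y ∧ t y p q < t x p q) ∨
      ∃ p q, H.Adj p q ∧ p < q ∧ p ∈ C y ∧ q ∈ C x ∧ t x p q < t y p q)) :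
    IsHGraph H G := by
  have hedge (P : W → W → Prop) : (∃ p q, H.Adj p q ∧ p < q ∧ P p q) ↔
      ∃ e : H.edgeSet, P e.1.inf e.1.sup := by
    constructor
    · rintro ⟨p, q, hpq, hlt, h⟩
      refine ⟨⟨s(p, q), hpq⟩, ?_⟩
      simpa [hlt.le] using h
    · rintro ⟨⟨e, he⟩, h⟩
      induction e with | _ p q
      rw [SimpleGraph.mem_edgeSet] at he
      rcases lt_or_gt_of_ne he.ne with hlt | hlt
      · exact ⟨p, q, he, hlt, by simpa [hlt.le] using h⟩
      · exact ⟨q, p, he.symm, hlt, by simpa [hlt.le] using h⟩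
  have hlr (e : H.edgeSet) : (e : Sym2 W) = s(e.1.inf, e.1.sup) := by
    obtain ⟨e, he⟩ := e
    induction e with | _ p q
    rcases le_total p q with h | h <;> simp [h]
  refine ⟨fun e => e.1.inf, fun e => e.1.sup, hlr, fun _ => N,
    fun x => cutSet H _ _ N (C x) fun e => t x e.1.inf e.1.sup, fun x => ?_,
    fun x => cutSet_induce_connected hlr hN (hC x) _, fun x y hxy => ?_⟩
  · obtain ⟨c, hc⟩ := (hC x).nonempty
    exact ⟨Sum.inl c, hc⟩
  · rw [cutSet_inter_nonempty (fun _ => ht _ _ _) fun _ => ht _ _ _, hG x y hxy,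
      hedge fun p q => p ∈ C x ∧ q ∈ C y ∧ t y p q < t x p q,
      hedge fun p q => p ∈ C y ∧ q ∈ C x ∧ t x p q < t y p q]

end Cuts

/-- The bag in `W4` of a vertex of the 2-subdivision. -/
def wheelBag {V E : Type} : V ⊕ (E × Fin 2) → Set (Fin 5)
  | Sum.inl _ => {4}
  | Sum.inr (_, 0) => {0, 1}
  | Sum.inr (_, 1) => {2, 3}

/-- The cut of the edge `p < q` of `W4` for a vertex of the 2-subdivision, where `i` and `j` number
the vertices and edges of the original graph. On the two edges of `W4` between two given bags the
cuts are reflections of each other, so that one of them detects `<` and the other `>`. -/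
def wheelCut {V E : Type} (l r : E → V) (i : V → ℕ) (j : E → ℕ) (N : ℕ) :
    V ⊕ (E × Fin 2) → Fin 5 → Fin 5 → ℕ
  | Sum.inl v, p, _ => if p = 0 ∨ p = 2 then i v else N - i v
  | Sum.inr (e, s), p, q =>
    if q = 4 then
      if p = 0 ∨ p = 2 then i (if s = 0 then l e else r e)
      else N - i (if s = 0 then l e else r e)
    else if p = 1 then j e else N - j e

theorem wheelBag_induce_connected {V E : Type} (x : V ⊕ (E × Fin 2)) :
    (W4.induce (wheelBag x)).Connected := by
  rcases x with v | ⟨e, s⟩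
  · simp only [wheelBag]
    exact SimpleGraph.Connected.mk SimpleGraph.Preconnected.of_subsingleton
  · fin_cases s
    · exact SimpleGraph.induce_pair_connected_of_adj (by simp [W4])
    · exact SimpleGraph.induce_pair_connected_of_adj (by simp [W4])

/-- For every finite graph `G`, the complement of the 2-subdivision of `G` is a
`W₄`-graph. -/
theorem complSubd2_isW4Graph {V : Type} [Fintype V] (G : SimpleGraph V)
    (l r : G.edgeSet → V)
    (hlr : ∀ e : G.edgeSet, (e : Sym2 V) = s(l e, r e)) :
    IsHGraph W4 (Subd2 G l r)ᶜ := by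
  obtain ⟨m, ⟨f⟩⟩ := Finite.exists_equiv_fin V
  obtain ⟨n, ⟨g⟩⟩ := Finite.exists_equiv_fin G.edgeSet
  let i : V → ℕ := fun v => f v
  let j : G.edgeSet → ℕ := fun e => g e
  let N := m + n + 1
  have hN : 0 < N := by simp only [N]; omega
  have hi (v) : i v < N := by simp only [i, N]; omega
  have hj (e) : j e < N := by simp only [j, N]; omega
  have hii (u v) : u = v ↔ i u = i v := by simp [i, Fin.val_inj]
  have hjj (e e') : e = e' ↔ j e = j e' := by simp [j, Fin.val_inj]
  clear_value i j N
  refine isHGraph_of_cuts hN wheelBag wheelBag_induce_connected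
    (wheelCut l r i j N) ?_ ?_
  · rintro (v | ⟨e, s⟩) p q
    · have := hi v
      simp only [wheelCut]
      split_ifs <;> omega
    · have := hi (l e)
      have := hi (r e)
      have := hj e
      simp only [wheelCut]
      split_ifs <;> omega
  · rintro (u | ⟨e, s⟩) (v | ⟨e', s'⟩) hne
    · simp [Subd2, wheelBag, hne]
    · have := hi u
      have := hi (l e')
      have := hi (r e')
      fin_cases s' <;>
        simp [Subd2, wheelBag, wheelCut, W4, Fin.exists_fin_succ, hii] <;> omega
    · have := hi v
      have := hi (l e)
      have := hi (r e)
      fin_cases s <;>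
        simp [Subd2, wheelBag, wheelCut, W4, Fin.exists_fin_succ, hii] <;> omega
    · have := hj e
      have := hj e'
      fin_cases s <;> fin_cases s' <;>
        simp [Subd2, wheelBag, wheelCut, W4, Fin.exists_fin_succ, Set.Nonempty, hjj] at hne ⊢ <;>
        omega
end

section
/- Graph isomorphism is closed under the 2-subdivision operation: two finite simple graphs G and G′ are isomorphic if and only if their 2-subdivisions Subd₂(G) and Subd₂(G′) are isomorphic. -/
namespace Subd2

variable {V V' : Type} {G : SimpleGraph V} {G' : SimpleGraph V'}
  {l r : G.edgeSet → V} {l' r' : G'.edgeSet → V'}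

/-- The end of the edge `p.1` next to the internal vertex `p` of the subdivision. -/
def branch (l r : G.edgeSet → V) (p : G.edgeSet × Fin 2) : V :=
  if p.2 = 0 then l p.1 else r p.1

theorem not_adj_inl_inl (u v : V) : ¬ (Subd2 G l r).Adj (Sum.inl u) (Sum.inl v) := by
  simp [Subd2]

theorem adj_inl_inr {u : V} {p : G.edgeSet × Fin 2} :
    (Subd2 G l r).Adj (Sum.inl u) (Sum.inr p) ↔ branch l r p = u := by
  obtain ⟨e, i⟩ := p
  fin_cases i <;> simp [Subd2, branch, eq_comm]

theorem adj_inr_inr {p q : G.edgeSet × Fin 2} :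
    (Subd2 G l r).Adj (Sum.inr p) (Sum.inr q) ↔ p.1 = q.1 ∧ p ≠ q := by
  obtain ⟨e, i⟩ := p
  obtain ⟨f, j⟩ := q
  simp only [Subd2, SimpleGraph.fromRel_adj, ne_eq, Sum.inr.injEq, Prod.mk.injEq]
  grind

theorem adj_branch (hlr : ∀ e : G.edgeSet, (e : Sym2 V) = s(l e, r e))
    {p q : G.edgeSet × Fin 2} (h : p.1 = q.1) (hne : p ≠ q) :
    G.Adj (branch l r p) (branch l r q) := by
  obtain ⟨e, i⟩ := p
  obtain ⟨f, j⟩ := q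
  obtain rfl : e = f := h
  have he : G.Adj (l e) (r e) := by
    rw [← SimpleGraph.mem_edgeSet, ← hlr e]
    exact e.2
  fin_cases i <;> fin_cases j <;> simp_all [branch, he.symm]

/-- An edge has exactly one internal vertex next to each of its ends. -/
theorem eq_of_branch_eq (hlr : ∀ e : G.edgeSet, (e : Sym2 V) = s(l e, r e))
    {p q : G.edgeSet × Fin 2} (h : p.1 = q.1) (hb : branch l r p = branch l r q) : p = q := by
  by_contra hne
  exact (adj_branch hlr h hne).ne hb

theorem eq_or_eq_of_fst_eq {p q s : G.edgeSet × Fin 2} (hpq : p.1 = q.1) (hne : p ≠ q)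
    (hs : s.1 = p.1) : s = p ∨ s = q := by
  obtain ⟨e, i⟩ := p
  obtain ⟨f, j⟩ := q
  obtain ⟨g, k⟩ := s
  simp only [Prod.mk.injEq, ne_eq] at *
  grind

theorem exists_branch_eq (hlr : ∀ e : G.edgeSet, (e : Sym2 V) = s(l e, r e))
    (e : G.edgeSet) {u : V} (hu : u ∈ (e : Sym2 V)) :
    ∃ p : G.edgeSet × Fin 2, p.1 = e ∧ branch l r p = u := by
  rw [hlr e, Sym2.mem_iff] at hu
  rcases hu with rfl | rfl
  · exact ⟨(e, 0), rfl, by simp [branch]⟩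
  · exact ⟨(e, 1), rfl, by simp [branch]⟩

theorem branch_mem (hlr : ∀ e : G.edgeSet, (e : Sym2 V) = s(l e, r e))
    (p : G.edgeSet × Fin 2) : branch l r p ∈ (p.1 : Sym2 V) := by
  rw [hlr p.1, Sym2.mem_iff, branch]
  split_ifs <;> simp

/-- An injective homomorphism of graphs induces one of their 2-subdivisions. -/
theorem exists_injective_hom (hlr : ∀ e : G.edgeSet, (e : Sym2 V) = s(l e, r e))
    (hlr' : ∀ e : G'.edgeSet, (e : Sym2 V') = s(l' e, r' e))
    (f : G →g G') (hf : Function.Injective f) :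
    ∃ g : Subd2 G l r →g Subd2 G' l' r', Function.Injective g := by
  have hex (p : G.edgeSet × Fin 2) : ∃ q : G'.edgeSet × Fin 2,
      q.1 = f.mapEdgeSet p.1 ∧ branch l' r' q = f (branch l r p) :=
    exists_branch_eq hlr' _ (Sym2.mem_map.2 ⟨_, branch_mem hlr p, rfl⟩)
  choose g hg hgb using hex
  have hginj : Function.Injective g := fun p q h =>
    eq_of_branch_eq hlr
      (SimpleGraph.Hom.mapEdgeSet.injective f hf (by rw [← hg, ← hg, h]))
      (hf (by rw [← hgb, ← hgb, h]))
  have hadj : ∀ x y, (Subd2 G l r).Adj x y →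
      (Subd2 G' l' r').Adj (Sum.map f g x) (Sum.map f g y) := by
    rintro (u | p) (v | q) h
    · exact absurd h (not_adj_inl_inl _ _)
    · exact adj_inl_inr.2 (by rw [hgb, adj_inl_inr.1 h])
    · exact (adj_inl_inr.2 (by rw [hgb, adj_inl_inr.1 h.symm])).symm
    · obtain ⟨h₁, h₂⟩ := adj_inr_inr.1 h
      exact adj_inr_inr.2 ⟨by rw [hg, hg, h₁], hginj.ne h₂⟩
  exact ⟨⟨Sum.map f g, fun {x y} h => hadj x y h⟩, hf.sumMap hginj⟩

/-- The original vertex nearest to a vertex of the subdivision. -/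
def nearest (l r : G.edgeSet → V) : V ⊕ (G.edgeSet × Fin 2) → V :=
  Sum.elim id (branch l r)

/-- The ends of a non-backtracking walk of length three in the subdivision have adjacent nearest
original vertices. -/
theorem adj_nearest (hlr : ∀ e : G.edgeSet, (e : Sym2 V) = s(l e, r e))
    {x y z t : V ⊕ (G.edgeSet × Fin 2)} (hxy : (Subd2 G l r).Adj x y)
    (hyz : (Subd2 G l r).Adj y z) (hzt : (Subd2 G l r).Adj z t) (hxz : x ≠ z) (hyt : y ≠ t) :
    G.Adj (nearest l r x) (nearest l r t) := by
  rcases y with y | y <;> rcases z with z | z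
  · exact absurd hyz (not_adj_inl_inl _ _)
  · rcases x with x | x
    · exact absurd hxy (not_adj_inl_inl _ _)
    rcases t with t | t
    · rw [adj_inl_inr] at hyz
      have := adj_inl_inr.1 hzt.symm
      exact absurd (congrArg Sum.inl (hyz.symm.trans this)) hyt
    have hx : branch l r x = branch l r z :=
      (adj_inl_inr.1 hxy.symm).trans (adj_inl_inr.1 hyz).symm
    obtain ⟨h₁, h₂⟩ := adj_inr_inr.1 hzt
    simpa [nearest, hx] using adj_branch hlr h₁ h₂
  · rcases t with t | t
    · exact absurd hzt (not_adj_inl_inl _ _)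
    rcases x with x | x
    · exact absurd (congrArg Sum.inl
        ((adj_inl_inr.1 hxy).symm.trans (adj_inl_inr.1 hyz.symm))) hxz
    have ht : branch l r t = branch l r y :=
      (adj_inl_inr.1 hzt).trans (adj_inl_inr.1 hyz.symm).symm
    obtain ⟨h₁, h₂⟩ := adj_inr_inr.1 hxy
    simpa [nearest, ht] using adj_branch hlr h₁ h₂
  · obtain ⟨h₁, h₂⟩ := adj_inr_inr.1 hyz
    have hx : nearest l r x = branch l r y := by
      rcases x with x | x
      · exact (adj_inl_inr.1 hxy).symm
      · have h₃ := (adj_inr_inr.1 hxy).1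
        rcases eq_or_eq_of_fst_eq h₁ h₂ h₃ with rfl | rfl
        · rfl
        · exact absurd rfl hxz
    have ht : nearest l r t = branch l r z := by
      rcases t with t | t
      · exact (adj_inl_inr.1 hzt.symm).symm
      · have h₃ := (adj_inr_inr.1 hzt.symm).1
        rcases eq_or_eq_of_fst_eq h₁ h₂ (h₃.trans h₁.symm) with rfl | rfl
        · exact absurd rfl hyt
        · rfl
    rw [hx, ht]
    exact adj_branch hlr h₁ h₂

/-- An isomorphism of 2-subdivisions induces an injective homomorphism of the original graphs. -/
theorem exists_injective_hom_of_iso (hlr : ∀ e : G.edgeSet, (e : Sym2 V) = s(l e, r e))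
    (hlr' : ∀ e : G'.edgeSet, (e : Sym2 V') = s(l' e, r' e))
    (φ : Subd2 G l r ≃g Subd2 G' l' r') :
    ∃ f : G →g G', Function.Injective f := by
  refine ⟨⟨fun v => nearest l' r' (φ (Sum.inl v)), ?_⟩, ?_⟩
  · intro v w h
    obtain ⟨p, hp, hpv⟩ := exists_branch_eq hlr ⟨s(v, w), h⟩ (Sym2.mem_mk_left v w)
    obtain ⟨q, hq, hqw⟩ := exists_branch_eq hlr ⟨s(v, w), h⟩ (Sym2.mem_mk_right v w)
    have hne : p ≠ q := by
      rintro rfl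
      exact h.ne (hpv.symm.trans hqw)
    exact adj_nearest hlr' (φ.map_adj_iff.2 (adj_inl_inr.2 hpv))
      (φ.map_adj_iff.2 (adj_inr_inr.2 ⟨hp.trans hq.symm, hne⟩))
      (φ.map_adj_iff.2 (adj_inl_inr.2 hqw).symm) (φ.injective.ne (by simp))
      (φ.injective.ne (by simp))
  · intro v w (h : nearest l' r' _ = nearest l' r' _)
    rcases hv : φ (Sum.inl v) with a | p <;> rcases hw : φ (Sum.inl w) with b | q <;>
      simp only [hv, hw, nearest, Sum.elim_inl, Sum.elim_inr, id] at h
    · exact Sum.inl_injective (φ.injective (by rw [hv, hw, h]))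
    · have := adj_inl_inr.2 h.symm
      rw [← hv, ← hw, φ.map_adj_iff] at this
      exact absurd this (not_adj_inl_inl _ _)
    · have := adj_inl_inr.2 h
      rw [← hv, ← hw, φ.map_adj_iff] at this
      exact absurd this (not_adj_inl_inl _ _)
    · obtain ⟨m, hm⟩ := φ.surjective (Sum.inl (branch l' r' p))
      have h₁ : (Subd2 G' l' r').Adj (φ m) (φ (Sum.inl v)) := by
        rw [hm, hv]; exact adj_inl_inr.2 rfl
      have h₂ : (Subd2 G' l' r').Adj (φ m) (φ (Sum.inl w)) := by
        rw [hm, hw]; exact adj_inl_inr.2 h.symm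
      rw [φ.map_adj_iff] at h₁ h₂
      rcases m with m | m
      · exact absurd h₁ (not_adj_inl_inl _ _)
      · exact (adj_inl_inr.1 h₁.symm).symm.trans (adj_inl_inr.1 h₂.symm)

end Subd2

/-- Finite graphs with injective homomorphisms in both directions are isomorphic. -/
theorem SimpleGraph.nonempty_iso_of_injective_hom {V W : Type*} [Finite V] [Finite W]
    {G : SimpleGraph V} {H : SimpleGraph W} (f : G →g H) (hf : Function.Injective f)
    (g : H →g G) (hg : Function.Injective g) : Nonempty (G ≃g H) := by
  have hbij : Function.Bijective f :=
    hf.bijective_of_nat_card_le (Nat.card_le_card_of_injective g hg)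
  have hsurj : Function.Surjective f.mapEdgeSet :=
    ((Hom.mapEdgeSet.injective f hf).bijective_of_nat_card_le
      (Nat.card_le_card_of_injective _ (Hom.mapEdgeSet.injective g hg))).2
  refine ⟨⟨Equiv.ofBijective f hbij, fun {a b} => ⟨fun h => ?_, fun h => f.map_adj h⟩⟩⟩
  obtain ⟨⟨e, he⟩, hfe⟩ := hsurj ⟨s(f a, f b), h⟩
  have : Sym2.map f e = Sym2.map f s(a, b) := congrArg Subtype.val hfe
  rwa [Sym2.map.injective hf this] at he

/-- Graph isomorphism is closed under the 2-subdivision operation: two finite graphs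
are isomorphic iff their 2-subdivisions are isomorphic. -/
theorem iso_iff_subd2_iso {V V' : Type} [Fintype V] [Fintype V']
    (G : SimpleGraph V) (G' : SimpleGraph V')
    (l r : G.edgeSet → V)
    (hlr : ∀ e : G.edgeSet, (e : Sym2 V) = s(l e, r e))
    (l' r' : G'.edgeSet → V')
    (hlr' : ∀ e : G'.edgeSet, (e : Sym2 V') = s(l' e, r' e)) :
    Nonempty (G ≃g G') ↔ Nonempty (Subd2 G l r ≃g Subd2 G' l' r') := by
  constructor
  · rintro ⟨f⟩
    obtain ⟨g, hg⟩ := Subd2.exists_injective_hom hlr hlr' f.toHom f.injective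
    obtain ⟨h, hh⟩ := Subd2.exists_injective_hom hlr' hlr f.symm.toHom f.symm.injective
    exact SimpleGraph.nonempty_iso_of_injective_hom g hg h hh
  · rintro ⟨φ⟩
    obtain ⟨f, hf⟩ := Subd2.exists_injective_hom_of_iso hlr hlr' φ
    obtain ⟨g, hg⟩ := Subd2.exists_injective_hom_of_iso hlr' hlr φ.symm
    exact SimpleGraph.nonempty_iso_of_injective_hom f hf g hg
end

section
/- Two finite simple graphs G and G′ are isomorphic if and only if the complements of their 2-subdivisions are isomorphic, i.e., G ≅ G′ iff the complement of Subd₂(G) is isomorphic to the complement of Subd₂(G′). (Consequently the map G ↦ complement of Subd₂(G) is an isomorphism-preserving and isomorphism-reflecting reduction into the class of complements of 2-subdivisions.) -/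
section Subdivision

variable {V V' : Type} {G : SimpleGraph V} {G' : SimpleGraph V'}
  {l r : G.edgeSet → V} {l' r' : G'.edgeSet → V'}

/-- The original endpoint next to an internal vertex of the 2-subdivision. -/
def subd2End (l r : G.edgeSet → V) (p : G.edgeSet × Fin 2) : V :=
  if p.2 = 0 then l p.1 else r p.1

theorem Subd2_adj_inl_inl (u v : V) : ¬ (Subd2 G l r).Adj (Sum.inl u) (Sum.inl v) := by
  simp [Subd2]

theorem Subd2_adj_inl_inr (u : V) (p : G.edgeSet × Fin 2) :
    (Subd2 G l r).Adj (Sum.inl u) (Sum.inr p) ↔ u = subd2End l r p := by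
  obtain ⟨e, i⟩ := p
  fin_cases i <;> simp [Subd2, subd2End]

theorem Subd2_adj_inr_inl (u : V) (p : G.edgeSet × Fin 2) :
    (Subd2 G l r).Adj (Sum.inr p) (Sum.inl u) ↔ u = subd2End l r p := by
  rw [SimpleGraph.adj_comm, Subd2_adj_inl_inr]

theorem Subd2_adj_inr_inr (p q : G.edgeSet × Fin 2) :
    (Subd2 G l r).Adj (Sum.inr p) (Sum.inr q) ↔ p.1 = q.1 ∧ p.2 ≠ q.2 := by
  obtain ⟨e, i⟩ := p
  obtain ⟨f, j⟩ := q
  simp only [Subd2, SimpleGraph.fromRel_adj, ne_eq, Sum.inr.injEq, Prod.mk.injEq]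
  grind

/-- The two internal vertices on a common edge lie next to the two ends of that edge. -/
theorem adj_subd2End (hlr : ∀ e : G.edgeSet, (e : Sym2 V) = s(l e, r e))
    {p q : G.edgeSet × Fin 2} (h₁ : p.1 = q.1) (h₂ : p.2 ≠ q.2) :
    G.Adj (subd2End l r p) (subd2End l r q) := by
  obtain ⟨e, i⟩ := p
  obtain ⟨f, j⟩ := q
  obtain rfl : e = f := h₁
  have h : G.Adj (l e) (r e) := by
    rw [← SimpleGraph.mem_edgeSet, ← hlr]
    exact e.2
  fin_cases i <;> fin_cases j <;> simp_all [subd2End, h.symm]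

/-- An edge of a graph becomes a path with two internal vertices in the 2-subdivision. -/
theorem exists_subd2_path (hlr : ∀ e : G.edgeSet, (e : Sym2 V) = s(l e, r e))
    {u v : V} (h : G.Adj u v) :
    ∃ p q : G.edgeSet × Fin 2, p.1 = q.1 ∧ p.2 ≠ q.2 ∧
      u = subd2End l r p ∧ v = subd2End l r q := by
  have he := hlr ⟨s(u, v), h⟩
  rcases Sym2.eq_iff.1 he with ⟨hu, hv⟩ | ⟨hu, hv⟩
  · exact ⟨(⟨s(u, v), h⟩, 0), (⟨s(u, v), h⟩, 1), rfl, by simp, by simpa [subd2End] using hu,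
      by simpa [subd2End] using hv⟩
  · exact ⟨(⟨s(u, v), h⟩, 1), (⟨s(u, v), h⟩, 0), rfl, by simp, by simpa [subd2End] using hu,
      by simpa [subd2End] using hv⟩

/-- Send an original vertex to itself and an internal vertex to its original neighbour. -/
def subd2Proj (l r : G.edgeSet → V) : V ⊕ (G.edgeSet × Fin 2) → V :=
  Sum.elim id (subd2End l r)

/-- An embedding of 2-subdivisions, rounded to original vertices, preserves adjacency. -/
theorem adj_subd2Proj (hlr : ∀ e : G.edgeSet, (e : Sym2 V) = s(l e, r e))
    (hlr' : ∀ e : G'.edgeSet, (e : Sym2 V') = s(l' e, r' e))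
    (φ : Subd2 G l r ↪g Subd2 G' l' r') {u v : V} (h : G.Adj u v) :
    G'.Adj (subd2Proj l' r' (φ (Sum.inl u))) (subd2Proj l' r' (φ (Sum.inl v))) := by
  obtain ⟨p, q, hpq, hne, hu, hv⟩ := exists_subd2_path hlr h
  have hup := φ.map_rel_iff.2 ((Subd2_adj_inl_inr (l := l) (r := r) u p).2 hu)
  have hpq := φ.map_rel_iff.2 ((Subd2_adj_inr_inr (l := l) (r := r) p q).2 ⟨hpq, hne⟩)
  have hqv := φ.map_rel_iff.2 ((Subd2_adj_inr_inl (l := l) (r := r) v q).2 hv)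
  have huq : φ (Sum.inl u) ≠ φ (Sum.inr q) := φ.injective.ne (by simp)
  have hpv : φ (Sum.inr p) ≠ φ (Sum.inl v) := φ.injective.ne (by simp)
  have key := fun p q => adj_subd2End hlr' (p := p) (q := q)
  generalize φ (Sum.inl u) = a at *
  generalize φ (Sum.inr p) = b at *
  generalize φ (Sum.inr q) = c at *
  generalize φ (Sum.inl v) = d at *
  rcases a with a | a <;> rcases b with b | b <;> rcases c with c | c <;> rcases d with d | d <;>
    simp only [Subd2_adj_inl_inl, Subd2_adj_inl_inr, Subd2_adj_inr_inl, Subd2_adj_inr_inr,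
      subd2Proj, Sum.elim_inl, Sum.elim_inr, id, ne_eq, Sum.inr.injEq, Sum.inl.injEq,
      Prod.ext_iff] at * <;> grind

/-- An isomorphism of 2-subdivisions, rounded to original vertices, is injective on them. -/
theorem subd2Proj_injective (φ : Subd2 G l r ≃g Subd2 G' l' r') :
    Function.Injective fun u => subd2Proj l' r' (φ (Sum.inl u)) := by
  intro u v huv
  by_contra hne
  have hadj : ¬ (Subd2 G' l' r').Adj (φ (Sum.inl u)) (φ (Sum.inl v)) := by
    rw [φ.map_adj_iff]
    exact Subd2_adj_inl_inl u v
  have hcommon : ∀ x, (Subd2 G' l' r').Adj x (φ (Sum.inl u)) →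
      ¬ (Subd2 G' l' r').Adj x (φ (Sum.inl v)) := by
    intro x
    obtain ⟨x, rfl⟩ := φ.surjective x
    rw [φ.map_adj_iff, φ.map_adj_iff]
    rcases x with x | x
    · simp [Subd2_adj_inl_inl]
    · simp only [Subd2_adj_inr_inl]
      rintro rfl h
      exact hne h.symm
  have hφ : φ (Sum.inl u) ≠ φ (Sum.inl v) := φ.injective.ne (by simpa using hne)
  dsimp only at huv
  generalize φ (Sum.inl u) = a at *
  generalize φ (Sum.inl v) = b at *
  rcases a with a | a <;> rcases b with b | b <;>
    simp only [subd2Proj, Sum.elim_inl, Sum.elim_inr, id] at huv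
  · exact hφ (congrArg _ huv)
  · exact hadj ((Subd2_adj_inl_inr _ _).2 huv)
  · exact hadj ((Subd2_adj_inr_inl _ _).2 huv.symm)
  · exact hcommon (Sum.inl (subd2End l' r' a)) ((Subd2_adj_inl_inr _ _).2 rfl)
      ((Subd2_adj_inl_inr _ _).2 huv)

/-- An isomorphism of 2-subdivisions makes the first graph a subgraph of the second. -/
theorem isContained_of_subd2_iso (hlr : ∀ e : G.edgeSet, (e : Sym2 V) = s(l e, r e))
    (hlr' : ∀ e : G'.edgeSet, (e : Sym2 V') = s(l' e, r' e))
    (φ : Subd2 G l r ≃g Subd2 G' l' r') : G.IsContained G' :=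
  ⟨⟨⟨_, fun h => adj_subd2Proj hlr hlr' φ.toEmbedding h⟩, subd2Proj_injective φ⟩⟩

/-- Finite graphs that contain each other are isomorphic. -/
theorem nonempty_iso_of_isContained [Finite V] [Finite V']
    (h : G.IsContained G') (h' : G'.IsContained G) : Nonempty (G ≃g G') := by
  obtain ⟨f⟩ := h
  obtain ⟨g⟩ := h'
  have hf : Function.Bijective f := Function.Injective.bijective_of_nat_card_le f.injective
    (Nat.card_le_card_of_injective g g.injective)
  have he := (f.mapEdgeSet.injective.bijective_of_nat_card_le
    (Nat.card_le_card_of_injective _ g.mapEdgeSet.injective)).surjective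
  refine ⟨⟨Equiv.ofBijective f hf, fun {u v} => ⟨fun h => ?_, fun h => f.toHom.map_adj h⟩⟩⟩
  obtain ⟨⟨e, hmem⟩, heq⟩ := he ⟨s(f u, f v), h⟩
  have heq : Sym2.map f e = Sym2.map f s(u, v) := congrArg Subtype.val heq
  rw [Sym2.map.injective f.injective heq] at hmem
  exact hmem

/-- An isomorphism of graphs carries internal vertices to internal vertices, swapping the two
on an edge when it does not respect the chosen order of the endpoints. -/
theorem nonempty_subd2_iso (hlr : ∀ e : G.edgeSet, (e : Sym2 V) = s(l e, r e))
    (hlr' : ∀ e : G'.edgeSet, (e : Sym2 V') = s(l' e, r' e)) (φ : G ≃g G') :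
    Nonempty (Subd2 G l r ≃g Subd2 G' l' r') := by
  classical
  obtain ⟨σ, hσ⟩ : ∃ σ : G.edgeSet ≃ G'.edgeSet, ∀ e, (σ e : Sym2 V') = Sym2.map φ e :=
    ⟨φ.mapEdgeSet, fun _ => rfl⟩
  let τ : G.edgeSet × Fin 2 ≃ G'.edgeSet × Fin 2 := Equiv.prodShear σ fun e =>
    if φ (l e) = l' (σ e) then Equiv.refl _ else Equiv.swap 0 1
  have hend : ∀ p, subd2End l' r' (τ p) = φ (subd2End l r p) := by
    rintro ⟨e, i⟩
    have he : s(φ (l e), φ (r e)) = s(l' (σ e), r' (σ e)) := by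
      rw [← hlr', ← Sym2.map_mk, ← hlr, hσ]
    rw [Sym2.eq_iff] at he
    fin_cases i <;> by_cases h : φ (l e) = l' (σ e) <;>
      simp [τ, subd2End, h] <;> grind
  have hτ : ∀ p q, ((τ p).1 = (τ q).1 ∧ (τ p).2 ≠ (τ q).2) ↔ (p.1 = q.1 ∧ p.2 ≠ q.2) := by
    rintro ⟨e, i⟩ ⟨f, j⟩
    by_cases h : e = f
    · subst h
      simp [τ]
    · simp [τ, h]
  refine ⟨⟨Equiv.sumCongr φ.toEquiv τ, ?_⟩⟩
  rintro (u | p) (v | q)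
  · simp [Subd2_adj_inl_inl]
  · simp [Subd2_adj_inl_inr, hend]
  · simp [Subd2_adj_inr_inl, hend]
  · simpa [Subd2_adj_inr_inr] using hτ p q

/-- Isomorphic graphs have isomorphic complements. -/
theorem nonempty_compl_iso (φ : G ≃g G') : Nonempty (Gᶜ ≃g G'ᶜ) :=
  ⟨⟨φ.toEquiv, (SimpleGraph.Embedding.complEquiv φ.toEmbedding).map_rel_iff⟩⟩

end Subdivision

/-- Two finite graphs are isomorphic iff the complements of their 2-subdivisions are
isomorphic; hence `G ↦ (Subd₂ G)ᶜ` is an isomorphism-preserving and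
isomorphism-reflecting reduction into the class of complements of 2-subdivisions. -/
theorem iso_iff_complSubd2_iso {V V' : Type} [Fintype V] [Fintype V']
    (G : SimpleGraph V) (G' : SimpleGraph V')
    (l r : G.edgeSet → V)
    (hlr : ∀ e : G.edgeSet, (e : Sym2 V) = s(l e, r e))
    (l' r' : G'.edgeSet → V')
    (hlr' : ∀ e : G'.edgeSet, (e : Sym2 V') = s(l' e, r' e)) :
    Nonempty (G ≃g G') ↔ Nonempty ((Subd2 G l r)ᶜ ≃g (Subd2 G' l' r')ᶜ) := by
  constructor
  · rintro ⟨φ⟩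
    exact (nonempty_subd2_iso hlr hlr' φ).elim nonempty_compl_iso
  · rintro ⟨φ⟩
    obtain ⟨ψ⟩ := nonempty_compl_iso φ
    rw [compl_compl, compl_compl] at ψ
    exact nonempty_iso_of_isContained (isContained_of_subd2_iso hlr hlr' ψ)
      (isContained_of_subd2_iso hlr' hlr ψ.symm)
end
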